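/- Let S ⊆ ℝⁿ (n ≥ 2) be a d-set with n−1 < d < n, let 1 < p < ∞ and (n−d)/p < s < 1, and let r ∈ (1,p) be such that ω := n(1/p − 1/r) + s satisfies n−d < ωr < sp and 0 < 1/r − 1/p < ω/n. Let 𝒲_S be a Whitney decomposition of ℝⁿ ∖ S. Then there exist constants c₀ > 2 and C such that for every f ∈ W^{s,p}(ℝⁿ) with Tr_S f = 0 ℋᵈ-almost everywhere on S, and every Q ∈ 𝒲_S with ℓ(Q) ≤ 1, writing Q* := 12Q and B := B(x_Q, ℓ(Q*)/c₀) (Euclidean ball) and f_B := ⨍_B f, one has ∫_Q |f(x) − f_B|^p dx + |Q| |f_B|^p ≤ C |Q*|^{1 + pω/n − p/r} (∫_{Q*} ∫_{Q*} |f(x)−f(y)|^r / |x−y|^{n+ωr} dy dx)^{p/r}. -/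

import Mathlib

open MeasureTheory Metric Set Filter
open scoped ENNReal NNReal Topology

noncomputable section

/-- ℝⁿ, with the sup-norm (given by the product metric on `Fin n → ℝ`). -/
abbrev Rn (n : ℕ) := Fin n → ℝ

/-- The Euclidean distance on `Rn n`. -/
def euclDist {n : ℕ} (x y : Rn n) : ℝ := Real.sqrt (∑ i, (x i - y i) ^ 2)

/-- The open Euclidean ball in `Rn n`. -/
def euclBall {n : ℕ} (x : Rn n) (r : ℝ) : Set (Rn n) := {y | euclDist x y < r}

/-- `S` is an (Ahlfors) `d`-set with regularity constant `C`. -/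
def IsDSet {n : ℕ} (S : Set (Rn n)) (d C : ℝ) : Prop :=
  IsClosed S ∧ 1 < C ∧ ∀ w ∈ S, ∀ r : ℝ, 0 < r → r ≤ 1 →
    ENNReal.ofReal (C⁻¹ * r ^ d) ≤ μH[d] (closedBall w r ∩ S) ∧
      μH[d] (closedBall w r ∩ S) ≤ ENNReal.ofReal (C * r ^ d)

/-- `Tr_S f = 0` pointwise ℋᵈ-almost everywhere on `S`. -/
def TraceZero {n : ℕ} (S : Set (Rn n)) (d : ℝ) (f : Rn n → ℝ) : Prop :=
  ∀ᵐ x ∂(μH[d]).restrict S,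
    Tendsto (fun r : ℝ => ⨍ y in closedBall x r, f y) (𝓝[>] 0) (𝓝 0)

/-- The `W^{s,p}(ℝⁿ)` norm (in `[0,∞]`), with Euclidean distance in the kernel. -/
def sobolevNorm {n : ℕ} (s p : ℝ) (f : Rn n → ℝ) : ℝ≥0∞ :=
  (∫⁻ x, ENNReal.ofReal |f x| ^ p) ^ (1 / p) +
  (∫⁻ x, ∫⁻ y, ENNReal.ofReal (|f x - f y| ^ p / euclDist x y ^ (s * p + n))) ^ (1 / p)

/-- The closed dyadic cube `2^{−j}(m + [0,1]ⁿ)`. Its sup-norm diameter is `2^{−j}`. -/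
def dyadicCube {n : ℕ} (j : ℤ) (m : Fin n → ℤ) : Set (Rn n) :=
  {y | ∀ i, (m i : ℝ) * 2 ^ (-j) ≤ y i ∧ y i ≤ ((m i : ℝ) + 1) * 2 ^ (-j)}

/-- The center of the dyadic cube `2^{−j}(m + [0,1]ⁿ)`. -/
def dyadicCenter {n : ℕ} (j : ℤ) (m : Fin n → ℤ) : Rn n :=
  fun i => ((m i : ℝ) + 1 / 2) * 2 ^ (-j)

/-- `W` is a Whitney decomposition of `ℝⁿ ∖ S` (dyadic cubes indexed by `(j,m)`). -/
def IsWhitney {n : ℕ} (S : Set (Rn n)) (W : Set (ℤ × (Fin n → ℤ))) : Prop :=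
  (∀ Q ∈ W, ∀ Q' ∈ W, Q ≠ Q' →
      interior (dyadicCube Q.1 Q.2) ∩ interior (dyadicCube Q'.1 Q'.2) = ∅) ∧
  (⋃ Q ∈ W, dyadicCube Q.1 Q.2) = Sᶜ ∧
  (∀ Q ∈ W, (∀ x ∈ dyadicCube Q.1 Q.2, (2:ℝ) ^ (-Q.1) ≤ infDist x S) ∧
      (∃ x ∈ dyadicCube Q.1 Q.2, infDist x S ≤ 4 * (2:ℝ) ^ (-Q.1)))

/-!
The averages of `f` over the cubes `closedBall x (R / 2 ^ k)` telescope, and two consecutive ones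
differ by at most `(R / 2 ^ k) ^ (ω - n / r) * ν (closedBall x (R / 2 ^ k)) ^ (1 / r)`, up to a
constant, where `ν` is the measure whose density is the inner integral of the Gagliardo energy.
Hence the limit `F x` of these averages differs from `f_B` by at most a dyadic Wolff potential of
`ν`. If a measure `μ` satisfies `μ (closedBall y ρ) ≲ ρ ^ t`, Fubini's theorem at each scale,
Minkowski's inequality and a geometric series bound the `L^q (μ)` norm of this potential, provided
`q ≥ r` and `ω - n / r + t / q > 0`. Lebesgue measure on `Q` (`t = n`, `q = p`, `F = f` by Lebesgue
differentiation) gives the oscillation term, and `μH[d]` on `S` near `Q` (`t = d`, `q = r`, `F = 0`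
because the trace vanishes) gives the bound for `f_B`.
-/

section MetricMeasure

lemma eLpNorm'_tsum_le {α : Type*} [MeasurableSpace α] {μ : Measure α} {q : ℝ}
    {f : ℕ → α → ℝ≥0∞} (hf : ∀ k, AEMeasurable (f k) μ) (hq : 1 ≤ q) :
    eLpNorm' (fun x => ∑' k, f k x) q μ ≤ ∑' k, eLpNorm' (f k) q μ := by
  have hq0 : 0 < q := by linarith
  have hmono : Monotone fun a : ℝ≥0∞ => a ^ q := ENNReal.monotone_rpow_of_nonneg hq0.le
  have h_sup : ∀ x, (∑' k, f k x) ^ q = ⨆ N, (∑ k ∈ Finset.range N, f k x) ^ q := fun x => by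
    rw [ENNReal.tsum_eq_iSup_nat,
      hmono.map_ciSup_of_continuousAt ENNReal.continuous_rpow_const.continuousAt]
  have h_partial : ∀ N, ∫⁻ x, (∑ k ∈ Finset.range N, f k x) ^ q ∂μ
      ≤ (∑' k, eLpNorm' (f k) q μ) ^ q := fun N =>
    calc ∫⁻ x, (∑ k ∈ Finset.range N, f k x) ^ q ∂μ
        = eLpNorm' (∑ k ∈ Finset.range N, f k) q μ ^ q := by
          simp only [← lintegral_rpow_enorm_eq_rpow_eLpNorm' hq0, Finset.sum_apply, enorm_eq_self]
      _ ≤ (∑' k, eLpNorm' (f k) q μ) ^ q := by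
          gcongr
          exact (eLpNorm'_sum_le (fun k _ => (hf k).aestronglyMeasurable) hq).trans
            (ENNReal.sum_le_tsum _)
  rw [eLpNorm'_eq_lintegral_enorm, one_div, ENNReal.rpow_inv_le_iff hq0]
  simp only [enorm_eq_self, h_sup]
  rw [lintegral_iSup' (fun N => by fun_prop) (ae_of_all _ fun x N N' hN => by
    dsimp only; gcongr)]
  exact iSup_le h_partial

lemma eLpNorm'_const_mul {α : Type*} [MeasurableSpace α] {μ : Measure α} {q : ℝ} {c : ℝ≥0∞}
    {f : α → ℝ≥0∞} (hc : c ≠ ⊤) (hq : 0 < q) :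
    eLpNorm' (fun x => c * f x) q μ = c * eLpNorm' f q μ := by
  simp only [eLpNorm'_eq_lintegral_enorm, enorm_eq_self, ENNReal.mul_rpow_of_nonneg _ _ hq.le]
  rw [lintegral_const_mul' _ _ (by finiteness), ENNReal.mul_rpow_of_nonneg _ _ (by positivity),
    ← ENNReal.rpow_mul, mul_one_div_cancel hq.ne', ENNReal.rpow_one]

variable {X : Type*} [PseudoMetricSpace X] [MeasurableSpace X] [OpensMeasurableSpace X]
  [SecondCountableTopology X] {μ ν : Measure X} [SFinite μ] [SFinite ν]

lemma measurable_measure_closedBall (ν : Measure X) [SFinite ν] (ρ : ℝ) :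
    Measurable fun x => ν (closedBall x ρ) := by
  have h : MeasurableSet {z : X × X | dist z.2 z.1 ≤ ρ} :=
    (isClosed_le (by fun_prop) continuous_const).measurableSet
  exact measurable_measure_prodMk_left h

lemma lintegral_measure_closedBall_comm (μ ν : Measure X) [SFinite μ] [SFinite ν] (ρ : ℝ) :
    ∫⁻ x, ν (closedBall x ρ) ∂μ = ∫⁻ y, μ (closedBall y ρ) ∂ν := by
  have h : MeasurableSet {z : X × X | dist z.2 z.1 ≤ ρ} :=
    (isClosed_le (by fun_prop) continuous_const).measurableSet
  calc ∫⁻ x, ν (closedBall x ρ) ∂μ = μ.prod ν {z : X × X | dist z.2 z.1 ≤ ρ} :=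
        (Measure.prod_apply h).symm
    _ = ∫⁻ y, μ (closedBall y ρ) ∂ν := by
        rw [Measure.prod_apply_symm h]
        simp only [closedBall, preimage_ofPred_eq, dist_comm]

lemma eLpNorm'_measure_closedBall_rpow_le {q r ρ : ℝ} {M : ℝ≥0∞} (hr : 0 < r) (hrq : r ≤ q)
    (hμ : ∀ y, μ (closedBall y ρ) ≤ M) :
    eLpNorm' (fun x => ν (closedBall x ρ) ^ (1 / r)) q μ
      ≤ M ^ (1 / q) * ν univ ^ (1 / r) := by
  have hq : 0 < q := hr.trans_le hrq
  have hqr : 0 ≤ q / r - 1 := by rw [sub_nonneg, one_le_div hr]; exact hrq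
  have h_split : ∀ x, (ν (closedBall x ρ) ^ (1 / r)) ^ q
      ≤ ν univ ^ (q / r - 1) * ν (closedBall x ρ) := fun x =>
    calc (ν (closedBall x ρ) ^ (1 / r)) ^ q
        = ν (closedBall x ρ) ^ (q / r - 1) * ν (closedBall x ρ) := by
          rw [← ENNReal.rpow_mul, one_div_mul_eq_div]
          nth_rw 3 [← ENNReal.rpow_one (ν (closedBall x ρ))]
          rw [← ENNReal.rpow_add_of_nonneg _ _ hqr zero_le_one, sub_add_cancel]
      _ ≤ ν univ ^ (q / r - 1) * ν (closedBall x ρ) := by gcongr; exact subset_univ _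
  rw [eLpNorm'_eq_lintegral_enorm, one_div q, ENNReal.rpow_inv_le_iff hq]
  calc ∫⁻ x, ‖ν (closedBall x ρ) ^ (1 / r)‖ₑ ^ q ∂μ
      ≤ ∫⁻ x, ν univ ^ (q / r - 1) * ν (closedBall x ρ) ∂μ := lintegral_mono h_split
    _ = ν univ ^ (q / r - 1) * ∫⁻ y, μ (closedBall y ρ) ∂ν := by
        rw [lintegral_const_mul _ (measurable_measure_closedBall ν ρ),
          lintegral_measure_closedBall_comm]
    _ ≤ ν univ ^ (q / r - 1) * (M * ν univ) := by
        gcongr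
        exact (lintegral_mono hμ).trans (lintegral_const M).le
    _ = (M ^ q⁻¹ * ν univ ^ (1 / r)) ^ q := by
        rw [ENNReal.mul_rpow_of_nonneg _ _ hq.le, ← ENNReal.rpow_mul, inv_mul_cancel₀ hq.ne',
          ENNReal.rpow_one, ← ENNReal.rpow_mul, one_div_mul_eq_div, mul_left_comm]
        nth_rw 2 [← ENNReal.rpow_one (ν univ)]
        rw [← ENNReal.rpow_add_of_nonneg _ _ hqr zero_le_one, sub_add_cancel]

/-- The dyadic Wolff potential of `ν` truncated at scale `R`: the sum over the scales
`ρ = R / 2 ^ k` of `ρ ^ β * ν (closedBall x ρ) ^ (1 / r)`. -/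
def dyadicWolffPotential (ν : Measure X) (β r R : ℝ) (x : X) : ℝ≥0∞ :=
  ∑' k : ℕ, ENNReal.ofReal (R / 2 ^ k) ^ β * ν (closedBall x (R / 2 ^ k)) ^ (1 / r)

lemma ofReal_div_two_pow_rpow {R : ℝ} (hR : 0 < R) (β : ℝ) (k : ℕ) :
    ENNReal.ofReal (R / 2 ^ k) ^ β = ENNReal.ofReal R ^ β * (2⁻¹ ^ β) ^ k := by
  have h_two : ENNReal.ofReal (2 ^ k)⁻¹ = 2⁻¹ ^ (k : ℝ) := by
    rw [ENNReal.ofReal_inv_of_pos (by positivity), ENNReal.ofReal_pow zero_le_two,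
      ENNReal.ofReal_ofNat, ENNReal.rpow_natCast, ENNReal.inv_pow]
  rw [div_eq_mul_inv, ENNReal.ofReal_mul hR.le, h_two, ENNReal.mul_rpow_of_ne_top (by simp)
    (by simp), ← ENNReal.rpow_natCast, ← ENNReal.rpow_mul, ← ENNReal.rpow_mul, mul_comm β]

theorem eLpNorm'_dyadicWolffPotential_le {q r t β R : ℝ} {M : ℝ≥0∞} (hr : 0 < r) (hrq : r ≤ q)
    (hq : 1 ≤ q) (hR : 0 < R)
    (hμ : ∀ (k : ℕ) (y : X), μ (closedBall y (R / 2 ^ k)) ≤ M * ENNReal.ofReal (R / 2 ^ k) ^ t) :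
    eLpNorm' (dyadicWolffPotential ν β r R) q μ
      ≤ (1 - 2⁻¹ ^ (β + t / q))⁻¹ *
        (M ^ (1 / q) * ENNReal.ofReal R ^ (β + t / q) * ν univ ^ (1 / r)) := by
  have hq0 : 0 < q := zero_lt_one.trans_le hq
  have h_scale : ∀ k : ℕ,
      eLpNorm' (fun x => ENNReal.ofReal (R / 2 ^ k) ^ β *
          ν (closedBall x (R / 2 ^ k)) ^ (1 / r)) q μ
        ≤ (2⁻¹ ^ (β + t / q)) ^ k *
          (M ^ (1 / q) * ENNReal.ofReal R ^ (β + t / q) * ν univ ^ (1 / r)) := fun k =>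
    have hρ : ENNReal.ofReal (R / 2 ^ k) ≠ 0 := (ENNReal.ofReal_pos.2 (by positivity)).ne'
    calc _ = ENNReal.ofReal (R / 2 ^ k) ^ β *
          eLpNorm' (fun x => ν (closedBall x (R / 2 ^ k)) ^ (1 / r)) q μ :=
          eLpNorm'_const_mul (by finiteness) hq0
      _ ≤ ENNReal.ofReal (R / 2 ^ k) ^ β *
          ((M * ENNReal.ofReal (R / 2 ^ k) ^ t) ^ (1 / q) * ν univ ^ (1 / r)) := by
          gcongr
          exact eLpNorm'_measure_closedBall_rpow_le hr hrq (hμ k)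
      _ = M ^ (1 / q) * ENNReal.ofReal (R / 2 ^ k) ^ (β + t / q) * ν univ ^ (1 / r) := by
          rw [ENNReal.mul_rpow_of_nonneg _ _ (by positivity), ← ENNReal.rpow_mul, mul_one_div,
            ENNReal.rpow_add _ _ hρ ENNReal.ofReal_ne_top]
          ring
      _ = _ := by
          rw [ofReal_div_two_pow_rpow hR]
          ring
  calc eLpNorm' (dyadicWolffPotential ν β r R) q μ
      ≤ ∑' k : ℕ, eLpNorm' (fun x => ENNReal.ofReal (R / 2 ^ k) ^ β *
          ν (closedBall x (R / 2 ^ k)) ^ (1 / r)) q μ :=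
        eLpNorm'_tsum_le (fun k => (((measurable_measure_closedBall ν _).pow_const _).const_mul
          _).aemeasurable) hq
    _ ≤ ∑' k : ℕ, (2⁻¹ ^ (β + t / q)) ^ k *
          (M ^ (1 / q) * ENNReal.ofReal R ^ (β + t / q) * ν univ ^ (1 / r)) :=
        ENNReal.tsum_le_tsum h_scale
    _ = _ := by rw [ENNReal.tsum_mul_right, ENNReal.tsum_geometric]

end MetricMeasure

section Average

variable {α E : Type*} [MeasurableSpace α] [NormedAddCommGroup E] [NormedSpace ℝ E] {r : ℝ}

lemma enorm_average_rpow_le (μ : Measure α) (f : α → E) (hr : 1 ≤ r) :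
    ‖⨍ x, f x ∂μ‖ₑ ^ r ≤ ⨍⁻ x, ‖f x‖ₑ ^ r ∂μ := by
  have hr0 : 0 < r := zero_lt_one.trans_le hr
  rw [average, laverage]
  set μ' : Measure α := (μ univ)⁻¹ • μ
  have hμ' : μ' univ ≤ 1 := by
    rw [Measure.smul_apply, smul_eq_mul]
    exact ENNReal.inv_mul_le_one _
  by_cases hf : AEStronglyMeasurable f μ'
  · rw [lintegral_rpow_enorm_eq_rpow_eLpNorm' hr0]
    gcongr
    calc ‖∫ x, f x ∂μ'‖ₑ ≤ eLpNorm' f 1 μ' := by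
          simpa [eLpNorm'_eq_lintegral_enorm] using enorm_integral_le_lintegral_enorm f
      _ ≤ eLpNorm' f r μ' * μ' univ ^ (1 / 1 - 1 / r) :=
          eLpNorm'_le_eLpNorm'_mul_rpow_measure_univ one_pos hr hf
      _ ≤ eLpNorm' f r μ' := mul_le_of_le_one_right' <|
          ENNReal.rpow_le_one hμ' (by rw [div_one, sub_nonneg, div_le_one hr0]; exact hr)
  · rw [integral_non_aestronglyMeasurable hf, enorm_zero, ENNReal.zero_rpow_of_pos hr0]
    exact zero_le

lemma average_sub_const [CompleteSpace E] {μ : Measure α} [IsFiniteMeasure μ] [NeZero μ]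
    {f : α → E} (hf : Integrable f μ) (c : E) :
    ⨍ x, (f x - c) ∂μ = (⨍ x, f x ∂μ) - c := by
  rw [average, integral_sub hf.to_average (integrable_const c), ← average, ← average,
    average_const]

lemma enorm_average_sub_average_rpow_le [CompleteSpace E] {μ ν : Measure α} [IsFiniteMeasure μ]
    [IsFiniteMeasure ν] [NeZero μ] [NeZero ν] {f : α → E} (hμ : Integrable f μ)
    (hν : Integrable f ν) (hr : 1 ≤ r) :
    ‖(⨍ x, f x ∂μ) - ⨍ y, f y ∂ν‖ₑ ^ r ≤ ⨍⁻ x, ⨍⁻ y, ‖f x - f y‖ₑ ^ r ∂ν ∂μ :=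
  calc ‖(⨍ x, f x ∂μ) - ⨍ y, f y ∂ν‖ₑ ^ r
      = ‖⨍ x, (f x - ⨍ y, f y ∂ν) ∂μ‖ₑ ^ r := by rw [average_sub_const hμ]
    _ ≤ ⨍⁻ x, ‖f x - ⨍ y, f y ∂ν‖ₑ ^ r ∂μ := enorm_average_rpow_le μ _ hr
    _ = ⨍⁻ x, ‖⨍ y, (f y - f x) ∂ν‖ₑ ^ r ∂μ := by
        simp only [average_sub_const hν, enorm_sub_rev]
    _ ≤ ⨍⁻ x, ⨍⁻ y, ‖f x - f y‖ₑ ^ r ∂ν ∂μ := by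
        refine laverage_mono_ae (ae_of_all _ fun x => ?_)
        simpa only [enorm_sub_rev (f x)] using enorm_average_rpow_le ν (fun y => f y - f x) hr

end Average

section EuclideanDistance

variable {n : ℕ}

lemma dist_le_euclDist (x y : Rn n) : dist x y ≤ euclDist x y := by
  refine (dist_pi_le_iff (Real.sqrt_nonneg _)).2 fun i => Real.le_sqrt_of_sq_le ?_
  rw [Real.dist_eq, sq_abs]
  exact Finset.single_le_sum (f := fun i => (x i - y i) ^ 2) (fun i _ => sq_nonneg _)
    (Finset.mem_univ i)

lemma euclDist_le_sqrt_mul_dist (x y : Rn n) : euclDist x y ≤ √n * dist x y := by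
  have h_coord : ∀ i, (x i - y i) ^ 2 ≤ dist x y ^ 2 := fun i => by
    rw [← sq_abs, ← Real.dist_eq]
    gcongr
    exact dist_le_pi_dist x y i
  calc euclDist x y ≤ √(∑ _i : Fin n, dist x y ^ 2) :=
        Real.sqrt_le_sqrt (Finset.sum_le_sum fun i _ => h_coord i)
    _ = √n * dist x y := by
        rw [Finset.sum_const, Finset.card_univ, Fintype.card_fin, nsmul_eq_mul,
          Real.sqrt_mul n.cast_nonneg, Real.sqrt_sq dist_nonneg]

lemma measurableSet_euclBall (c : Rn n) (R : ℝ) : MeasurableSet (euclBall c R) :=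
  (isOpen_lt (by unfold euclDist; fun_prop) continuous_const).measurableSet

lemma euclBall_subset_closedBall (c : Rn n) (R : ℝ) : euclBall c R ⊆ closedBall c R :=
  fun y (hy : euclDist c y < R) => by
    rw [mem_closedBall']
    exact (dist_le_euclDist c y).trans hy.le

lemma ball_subset_euclBall (hn : 0 < n) (c : Rn n) (R : ℝ) :
    ball c (R / √n) ⊆ euclBall c R := fun y hy => by
  rw [mem_ball', lt_div_iff₀' (by positivity)] at hy
  exact (euclDist_le_sqrt_mul_dist c y).trans_lt hy

lemma ofReal_rpow_le_volume_euclBall (hn : 0 < n) (c : Rn n) {R : ℝ} (hR : 0 < R) :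
    ENNReal.ofReal (2 * (R / √n)) ^ (n : ℝ) ≤ volume (euclBall c R) := by
  rw [ENNReal.rpow_natCast, ← ENNReal.ofReal_pow (by positivity)]
  have h := Real.volume_pi_ball c (r := R / √n) (by positivity)
  rw [Fintype.card_fin] at h
  exact h.symm.trans_le (measure_mono (ball_subset_euclBall hn c R))

lemma volume_closedBall_eq_rpow (c : Rn n) {R : ℝ} (hR : 0 ≤ R) :
    volume (closedBall c R) = ENNReal.ofReal (2 * R) ^ (n : ℝ) := by
  rw [Real.volume_pi_closedBall c hR, Fintype.card_fin, ENNReal.rpow_natCast,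
    ENNReal.ofReal_pow (by positivity)]

end EuclideanDistance

section Gagliardo

variable {n : ℕ} {E : Type*} [NormedAddCommGroup E] {f : Rn n → E} {r ω : ℝ}

/-- The Gagliardo kernel `|f x - f y| ^ r / |x - y| ^ (n + ω r)`, with values in `[0, ∞]`. -/
def gagliardoKernel (f : Rn n → E) (r ω : ℝ) (x y : Rn n) : ℝ≥0∞ :=
  ‖f x - f y‖ₑ ^ r * ENNReal.ofReal (euclDist x y) ^ (-((n : ℝ) + ω * r))

/-- The measure on `Q` whose density at `x` is the integral over `y ∈ Q` of the Gagliardo kernel;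
its total mass is the `r`-th power of the `W^{ω,r}(Q)` seminorm of `f`. -/
def gagliardoMeasure (f : Rn n → E) (r ω : ℝ) (Q : Set (Rn n)) : Measure (Rn n) :=
  (volume.restrict Q).withDensity fun x => ∫⁻ y in Q, gagliardoKernel f r ω x y

instance (Q : Set (Rn n)) : SFinite (gagliardoMeasure f r ω Q) := by
  unfold gagliardoMeasure; infer_instance

lemma gagliardoMeasure_univ (f : Rn n → E) (r ω : ℝ) (Q : Set (Rn n)) :
    gagliardoMeasure f r ω Q univ = ∫⁻ x in Q, ∫⁻ y in Q, gagliardoKernel f r ω x y := by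
  rw [gagliardoMeasure, withDensity_apply _ MeasurableSet.univ, Measure.restrict_univ]

lemma lintegral_gagliardoKernel_le {Q U V : Set (Rn n)} (hU : MeasurableSet U) (hUQ : U ⊆ Q)
    (hVQ : V ⊆ Q) :
    ∫⁻ x in U, ∫⁻ y in V, gagliardoKernel f r ω x y ≤ gagliardoMeasure f r ω Q U := by
  rw [gagliardoMeasure, withDensity_apply _ hU, Measure.restrict_restrict hU,
    inter_eq_self_of_subset_left hUQ]
  exact lintegral_mono fun x => lintegral_mono_set hVQ

lemma enorm_sub_rpow_le_mul_gagliardoKernel {D : ℝ} {x y : Rn n} (hr : 0 < r)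
    (hω : 0 ≤ n + ω * r) (hD : euclDist x y ≤ D) :
    ‖f x - f y‖ₑ ^ r ≤ ENNReal.ofReal D ^ (n + ω * r) * gagliardoKernel f r ω x y := by
  rcases eq_or_ne x y with rfl | hxy
  · simp [ENNReal.zero_rpow_of_pos hr]
  have h_pos : 0 < euclDist x y := (dist_pos.2 hxy).trans_le (dist_le_euclDist x y)
  calc ‖f x - f y‖ₑ ^ r
      = ENNReal.ofReal (euclDist x y) ^ (n + ω * r) * gagliardoKernel f r ω x y := by
        rw [gagliardoKernel, mul_left_comm, ← ENNReal.rpow_add _ _ (by simpa) (by simp),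
          add_neg_cancel, ENNReal.rpow_zero, mul_one]
    _ ≤ ENNReal.ofReal D ^ (n + ω * r) * gagliardoKernel f r ω x y := by gcongr

variable [NormedSpace ℝ E] [CompleteSpace E]

lemma enorm_setAverage_sub_setAverage_rpow_le {D : ℝ} {Q U V : Set (Rn n)} (hr : 1 ≤ r)
    (hω : 0 ≤ n + ω * r) (hf : IntegrableOn f Q) (hU : MeasurableSet U) (hV : MeasurableSet V)
    (hUQ : U ⊆ Q) (hVQ : V ⊆ Q) (hU0 : volume U ≠ 0) (hV0 : volume V ≠ 0) (hQ : volume Q ≠ ⊤)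
    (hD : ∀ x ∈ U, ∀ y ∈ V, euclDist x y ≤ D) :
    ‖(⨍ x in U, f x) - ⨍ y in V, f y‖ₑ ^ r
      ≤ (volume U)⁻¹ * (volume V)⁻¹ * ENNReal.ofReal D ^ (n + ω * r) *
        gagliardoMeasure f r ω Q U := by
  have : NeZero (volume.restrict U) := ⟨by simpa⟩
  have : NeZero (volume.restrict V) := ⟨by simpa⟩
  have : IsFiniteMeasure (volume.restrict U) :=
    isFiniteMeasure_restrict.2 (measure_ne_top_of_subset hUQ hQ)
  have : IsFiniteMeasure (volume.restrict V) :=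
    isFiniteMeasure_restrict.2 (measure_ne_top_of_subset hVQ hQ)
  calc ‖(⨍ x in U, f x) - ⨍ y in V, f y‖ₑ ^ r
      ≤ ⨍⁻ x in U, ⨍⁻ y in V, ‖f x - f y‖ₑ ^ r ∂volume ∂volume :=
        enorm_average_sub_average_rpow_le (hf.mono_set hUQ) (hf.mono_set hVQ) hr
    _ = (volume U)⁻¹ * (volume V)⁻¹ * ∫⁻ x in U, ∫⁻ y in V, ‖f x - f y‖ₑ ^ r := by
        simp only [setLAverage_eq, ENNReal.div_eq_inv_mul]
        rw [lintegral_const_mul' _ _ (by simpa), mul_assoc]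
    _ ≤ (volume U)⁻¹ * (volume V)⁻¹ * ∫⁻ x in U, ∫⁻ y in V,
          ENNReal.ofReal D ^ (n + ω * r) * gagliardoKernel f r ω x y := by
        gcongr (volume U)⁻¹ * (volume V)⁻¹ * ?_
        exact setLIntegral_mono' hU fun x hx => setLIntegral_mono' hV fun y hy =>
          enorm_sub_rpow_le_mul_gagliardoKernel (by linarith) hω (hD x hx y hy)
    _ ≤ (volume U)⁻¹ * (volume V)⁻¹ * ENNReal.ofReal D ^ (n + ω * r) *
          gagliardoMeasure f r ω Q U := by
        simp_rw [lintegral_const_mul' _ _ (ENNReal.rpow_ne_top_of_nonneg hω ENNReal.ofReal_ne_top)]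
        rw [mul_assoc (_ * _)]
        gcongr
        exact lintegral_gagliardoKernel_le hU hUQ hVQ

/-- The constant with which the average of `f` over a ball of radius `ρ` and its average over a set
`V` are compared, when `v ρ ^ n ≤ |V|` and points of the ball and of `V` are at distance at most
`D ρ`. -/
def oscillationConst (n : ℕ) (v : ℝ≥0∞) (D r ω : ℝ) : ℝ≥0∞ :=
  (v⁻¹ * ENNReal.ofReal D ^ (n + ω * r)) ^ (1 / r)

lemma enorm_ballAverage_sub_setAverage_le {D ρ : ℝ} {v : ℝ≥0∞} {x : Rn n} {Q V : Set (Rn n)}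
    (hr : 1 ≤ r) (hω : 0 ≤ n + ω * r) (hf : IntegrableOn f Q) (hρ : 0 < ρ) (hv : v ≠ 0)
    (hV : MeasurableSet V) (hxQ : closedBall x ρ ⊆ Q) (hVQ : V ⊆ Q) (hQ : volume Q ≠ ⊤)
    (hvol : v * ENNReal.ofReal ρ ^ (n : ℝ) ≤ volume V)
    (hD : ∀ y ∈ closedBall x ρ, ∀ z ∈ V, euclDist y z ≤ D * ρ) :
    ‖(⨍ y in closedBall x ρ, f y) - ⨍ z in V, f z‖ₑ
      ≤ oscillationConst n v D r ω * (ENNReal.ofReal ρ ^ (ω - n / r) *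
        gagliardoMeasure f r ω Q (closedBall x ρ) ^ (1 / r)) := by
  have hr0 : 0 < r := zero_lt_one.trans_le hr
  have hρ0 : ENNReal.ofReal ρ ≠ 0 := (ENNReal.ofReal_pos.2 hρ).ne'
  have hρn : ENNReal.ofReal ρ ^ (n : ℝ) ≠ 0 := by simp [hρ]
  have h_ball : ENNReal.ofReal ρ ^ (n : ℝ) ≤ volume (closedBall x ρ) := by
    rw [volume_closedBall_eq_rpow x hρ.le]
    gcongr
    linarith
  rw [← ENNReal.rpow_le_rpow_iff hr0]
  calc _ ≤ (volume (closedBall x ρ))⁻¹ * (volume V)⁻¹ * ENNReal.ofReal (D * ρ) ^ (n + ω * r) *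
          gagliardoMeasure f r ω Q (closedBall x ρ) :=
        enorm_setAverage_sub_setAverage_rpow_le hr hω hf measurableSet_closedBall hV hxQ hVQ
          ((pos_iff_ne_zero.2 hρn).trans_le h_ball).ne'
          ((pos_iff_ne_zero.2 (mul_ne_zero hv hρn)).trans_le hvol).ne' hQ hD
    _ ≤ (ENNReal.ofReal ρ ^ (n : ℝ))⁻¹ * (v * ENNReal.ofReal ρ ^ (n : ℝ))⁻¹ *
          ENNReal.ofReal (D * ρ) ^ (n + ω * r) * gagliardoMeasure f r ω Q (closedBall x ρ) := by
        gcongr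
    _ = v⁻¹ * ENNReal.ofReal D ^ (n + ω * r) * (ENNReal.ofReal ρ ^ ((ω - n / r) * r) *
          gagliardoMeasure f r ω Q (closedBall x ρ)) := by
        have h_exp : (ω - n / r) * r = -n + -n + (n + ω * r) := by field_simp; ring
        rw [h_exp, ENNReal.rpow_add _ _ hρ0 ENNReal.ofReal_ne_top,
          ENNReal.rpow_add _ _ hρ0 ENNReal.ofReal_ne_top, ENNReal.rpow_neg,
          ENNReal.ofReal_mul' hρ.le, ENNReal.mul_rpow_of_nonneg _ _ hω,
          ENNReal.mul_inv (.inl hv) (.inr hρn)]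
        ring
    _ = _ := by
        simp only [oscillationConst, ENNReal.mul_rpow_of_nonneg _ _ hr0.le, ← ENNReal.rpow_mul,
          one_div_mul_cancel hr0.ne', ENNReal.rpow_one]

lemma euclDist_le_of_mem_closedBall {c x y : Rn n} {ρ : ℝ} (hx : x ∈ closedBall c ρ)
    (hy : y ∈ closedBall c ρ) : euclDist x y ≤ 2 * √n * ρ :=
  calc euclDist x y ≤ √n * dist x y := euclDist_le_sqrt_mul_dist x y
    _ ≤ √n * (ρ + ρ) := by
        gcongr
        exact (dist_triangle_right x y c).trans (add_le_add hx hy)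
    _ = 2 * √n * ρ := by ring

lemma enorm_ballAverage_sub_limit_le {R : ℝ} {x : Rn n} {a : E} {Q : Set (Rn n)} (hr : 1 ≤ r)
    (hω : 0 ≤ n + ω * r) (hf : IntegrableOn f Q) (hR : 0 < R) (hxQ : closedBall x R ⊆ Q)
    (hQ : volume Q ≠ ⊤)
    (ha : Tendsto (fun ρ => ⨍ y in closedBall x ρ, f y) (𝓝[>] 0) (𝓝 a)) :
    ‖(⨍ y in closedBall x R, f y) - a‖ₑ ≤ oscillationConst n 1 (2 * √n) r ω *
      dyadicWolffPotential (gagliardoMeasure f r ω Q) (ω - n / r) r R x := by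
  have h_scale : ∀ k : ℕ, 0 < R / 2 ^ k := fun k => by positivity
  have h_le : ∀ k : ℕ, R / 2 ^ k ≤ R := fun k =>
    div_le_self hR.le (one_le_pow₀ one_le_two)
  have h_half : ∀ k : ℕ, 2 * (R / 2 ^ (k + 1)) = R / 2 ^ k := fun k => by
    rw [pow_succ]; field_simp
  have h_zero : Tendsto (fun k : ℕ => R / 2 ^ k) atTop (𝓝[>] 0) :=
    tendsto_nhdsWithin_iff.2 ⟨tendsto_const_nhds.div_atTop
      (tendsto_pow_atTop_atTop_of_one_lt one_lt_two), .of_forall h_scale⟩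
  have h_step : ∀ k : ℕ, edist (⨍ y in closedBall x (R / 2 ^ k), f y)
      (⨍ y in closedBall x (R / 2 ^ (k + 1)), f y) ≤ oscillationConst n 1 (2 * √n) r ω *
        (ENNReal.ofReal (R / 2 ^ k) ^ (ω - n / r) *
          gagliardoMeasure f r ω Q (closedBall x (R / 2 ^ k)) ^ (1 / r)) := fun k => by
    have h_sub : closedBall x (R / 2 ^ (k + 1)) ⊆ closedBall x (R / 2 ^ k) :=
      closedBall_subset_closedBall (by linarith [h_half k, h_scale (k + 1)])
    have h_ballQ : closedBall x (R / 2 ^ k) ⊆ Q :=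
      (closedBall_subset_closedBall (h_le k)).trans hxQ
    rw [edist_eq_enorm_sub]
    refine enorm_ballAverage_sub_setAverage_le hr hω hf (h_scale k) one_ne_zero
      measurableSet_closedBall h_ballQ (h_sub.trans h_ballQ) hQ ?_ fun y hy z hz =>
        euclDist_le_of_mem_closedBall hy (h_sub hz)
    rw [one_mul, volume_closedBall_eq_rpow x (h_scale _).le, h_half]
  have h_tel := edist_le_tsum_of_edist_le_of_tendsto₀ _ h_step (ha.comp h_zero)
  rwa [pow_zero, div_one, edist_eq_enorm_sub, ENNReal.tsum_mul_left] at h_tel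

lemma enorm_limit_sub_setAverage_le {D R : ℝ} {v : ℝ≥0∞} {x : Rn n} {a : E} {Q V : Set (Rn n)}
    (hr : 1 ≤ r) (hω : 0 ≤ n + ω * r) (hf : IntegrableOn f Q) (hR : 0 < R) (hv : v ≠ 0)
    (hV : MeasurableSet V) (hxQ : closedBall x R ⊆ Q) (hVQ : V ⊆ Q) (hQ : volume Q ≠ ⊤)
    (hvol : v * ENNReal.ofReal R ^ (n : ℝ) ≤ volume V)
    (hD : ∀ y ∈ closedBall x R, ∀ z ∈ V, euclDist y z ≤ D * R)
    (ha : Tendsto (fun ρ => ⨍ y in closedBall x ρ, f y) (𝓝[>] 0) (𝓝 a)) :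
    ‖a - ⨍ y in V, f y‖ₑ
      ≤ (oscillationConst n 1 (2 * √n) r ω + oscillationConst n v D r ω) *
        dyadicWolffPotential (gagliardoMeasure f r ω Q) (ω - n / r) r R x := by
  have h_first : ENNReal.ofReal R ^ (ω - n / r) *
      gagliardoMeasure f r ω Q (closedBall x R) ^ (1 / r)
      ≤ dyadicWolffPotential (gagliardoMeasure f r ω Q) (ω - n / r) r R x := by
    simpa only [dyadicWolffPotential, pow_zero, div_one] using ENNReal.le_tsum
      (f := fun k : ℕ => ENNReal.ofReal (R / 2 ^ k) ^ (ω - n / r) *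
        gagliardoMeasure f r ω Q (closedBall x (R / 2 ^ k)) ^ (1 / r)) 0
  calc ‖a - ⨍ y in V, f y‖ₑ
      ≤ ‖(⨍ y in closedBall x R, f y) - a‖ₑ +
          ‖(⨍ y in closedBall x R, f y) - ⨍ y in V, f y‖ₑ := by
        simpa only [edist_eq_enorm_sub, enorm_sub_rev a] using
          edist_triangle a (⨍ y in closedBall x R, f y) (⨍ y in V, f y)
    _ ≤ _ := by
        rw [add_mul]
        gcongr
        · exact enorm_ballAverage_sub_limit_le hr hω hf hR hxQ hQ ha
        · exact (enorm_ballAverage_sub_setAverage_le hr hω hf hR hv hV hxQ hVQ hQ hvol hD).trans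
            (by gcongr)

lemma oscillationConst_ne_top {v : ℝ≥0∞} (hr : 0 ≤ r) (hω : 0 ≤ n + ω * r) (hv : v ≠ 0) (D : ℝ) :
    oscillationConst n v D r ω ≠ ⊤ := by
  have := ENNReal.inv_ne_top.2 hv
  unfold oscillationConst
  finiteness

lemma exists_enorm_limit_sub_euclBallAverage_le (E : Type*) [NormedAddCommGroup E]
    [NormedSpace ℝ E] [CompleteSpace E] (hn : 0 < n) {a b : ℝ} (hr : 1 ≤ r)
    (hω : 0 ≤ n + ω * r) (hb : 0 < b) (hba : b ≤ a) :
    ∃ A : ℝ≥0∞, A ≠ ⊤ ∧ ∀ (f : Rn n → E) (l : E) (c x : Rn n) (R : ℝ), 0 < R →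
      IntegrableOn f (closedBall c (a * R)) → closedBall x R ⊆ closedBall c (a * R) →
      Tendsto (fun ρ => ⨍ y in closedBall x ρ, f y) (𝓝[>] 0) (𝓝 l) →
      ‖l - ⨍ y in euclBall c (b * R), f y‖ₑ ≤ A * dyadicWolffPotential
        (gagliardoMeasure f r ω (closedBall c (a * R))) (ω - n / r) r R x := by
  have hr0 : 0 ≤ r := zero_le_one.trans hr
  set v : ℝ≥0∞ := ENNReal.ofReal (2 * (b / √n)) ^ (n : ℝ)
  have hv : v ≠ 0 :=
    (ENNReal.rpow_pos (ENNReal.ofReal_pos.2 (by positivity)) ENNReal.ofReal_ne_top).ne'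
  refine ⟨oscillationConst n 1 (2 * √n) r ω + oscillationConst n v (2 * √n * a) r ω,
    ENNReal.add_ne_top.2 ⟨oscillationConst_ne_top hr0 hω one_ne_zero _,
      oscillationConst_ne_top hr0 hω hv _⟩, fun f l c x R hR hf hxQ hl => ?_⟩
  have hvol : v * ENNReal.ofReal R ^ (n : ℝ) ≤ volume (euclBall c (b * R)) := by
    rw [← ENNReal.mul_rpow_of_nonneg _ _ n.cast_nonneg, ← ENNReal.ofReal_mul' hR.le]
    convert ofReal_rpow_le_volume_euclBall hn c (mul_pos hb hR) using 3
    ring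
  have hV : euclBall c (b * R) ⊆ closedBall c (a * R) :=
    (euclBall_subset_closedBall c _).trans (closedBall_subset_closedBall (by gcongr))
  refine enorm_limit_sub_setAverage_le hr hω hf hR hv (measurableSet_euclBall _ _) hxQ hV
    measure_closedBall_lt_top.ne hvol (fun y hy z hz => ?_) hl
  exact (euclDist_le_of_mem_closedBall (hxQ hy) (hV hz)).trans_eq (by ring)

theorem exists_eLpNorm'_sub_euclBallAverage_le (E : Type*) [NormedAddCommGroup E]
    [NormedSpace ℝ E] [CompleteSpace E] (hn : 0 < n) {a b q t : ℝ} {M : ℝ≥0∞} (hr : 1 ≤ r)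
    (hrq : r ≤ q) (hω : 0 ≤ n + ω * r) (hexp : 0 < ω - n / r + t / q) (hb : 0 < b) (hba : b ≤ a)
    (hM : M ≠ ⊤) :
    ∃ K : ℝ≥0∞, K ≠ ⊤ ∧ ∀ (f F : Rn n → E) (c : Rn n) (R : ℝ) (μ : Measure (Rn n)) [SFinite μ],
      0 < R → IntegrableOn f (closedBall c (a * R)) →
      (∀ (k : ℕ) (y : Rn n), μ (closedBall y (R / 2 ^ k)) ≤ M * ENNReal.ofReal (R / 2 ^ k) ^ t) →
      (∀ᵐ x ∂μ, closedBall x R ⊆ closedBall c (a * R)) →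
      (∀ᵐ x ∂μ, Tendsto (fun ρ => ⨍ y in closedBall x ρ, f y) (𝓝[>] 0) (𝓝 (F x))) →
      eLpNorm' (fun x => F x - ⨍ y in euclBall c (b * R), f y) q μ
        ≤ K * (ENNReal.ofReal R ^ (ω - n / r + t / q) *
          gagliardoMeasure f r ω (closedBall c (a * R)) univ ^ (1 / r)) := by
  have hq : 1 ≤ q := hr.trans hrq
  have hq0 : 0 < q := zero_lt_one.trans_le hq
  obtain ⟨A, hA, h_pointwise⟩ := exists_enorm_limit_sub_euclBallAverage_le E hn hr hω hb hba
  have h_ratio : (2⁻¹ : ℝ≥0∞) ^ (ω - n / r + t / q) < 1 :=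
    ENNReal.rpow_lt_one (ENNReal.inv_lt_one.2 ENNReal.one_lt_two) hexp
  refine ⟨A * ((1 - 2⁻¹ ^ (ω - n / r + t / q))⁻¹ * M ^ (1 / q)), ENNReal.mul_ne_top hA
    (ENNReal.mul_ne_top (ENNReal.inv_ne_top.2 (tsub_pos_of_lt h_ratio).ne') (by finiteness)),
    fun f F c R μ _ hR hf hμ hQ hF => ?_⟩
  calc _ ≤ eLpNorm' (fun x => A * dyadicWolffPotential
          (gagliardoMeasure f r ω (closedBall c (a * R))) (ω - n / r) r R x) q μ := by
        refine eLpNorm'_mono_enorm_ae hq0.le ?_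
        filter_upwards [hQ, hF] with x hxQ hxF
        exact h_pointwise f (F x) c x R hR hf hxQ hxF
    _ ≤ A * ((1 - 2⁻¹ ^ (ω - n / r + t / q))⁻¹ * (M ^ (1 / q) *
          ENNReal.ofReal R ^ (ω - n / r + t / q) *
          gagliardoMeasure f r ω (closedBall c (a * R)) univ ^ (1 / r))) := by
        rw [eLpNorm'_const_mul hA hq0]
        gcongr
        exact eLpNorm'_dyadicWolffPotential_le (by linarith) hrq hq hR hμ
    _ = _ := by ring

theorem exists_eLpNorm'_restrict_sub_euclBallAverage_le (E : Type*) [NormedAddCommGroup E]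
    [NormedSpace ℝ E] [CompleteSpace E] (hn : 0 < n) {a b q : ℝ} (hr : 1 ≤ r) (hrq : r ≤ q)
    (hω : 0 ≤ n + ω * r) (hexp : 0 < ω - n / r + n / q) (ha : 2 ≤ a) (hb : 0 < b) (hba : b ≤ a) :
    ∃ K : ℝ≥0∞, K ≠ ⊤ ∧ ∀ (f : Rn n → E) (c : Rn n) (R : ℝ), 0 < R → LocallyIntegrable f →
      eLpNorm' (fun x => f x - ⨍ y in euclBall c (b * R), f y) q (volume.restrict (closedBall c R))
        ≤ K * (ENNReal.ofReal R ^ (ω - n / r + n / q) *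
          gagliardoMeasure f r ω (closedBall c (a * R)) univ ^ (1 / r)) := by
  obtain ⟨K, hK, h_bound⟩ := exists_eLpNorm'_sub_euclBallAverage_le E hn (M := 2 ^ (n : ℝ))
    hr hrq hω hexp hb hba (by finiteness)
  refine ⟨K, hK, fun f c R hR hf => h_bound f f c R _ hR
    (hf.integrableOn_isCompact (isCompact_closedBall _ _)) (fun k y => ?_)
    ((ae_restrict_mem measurableSet_closedBall).mono fun x hx => ?_) (ae_restrict_of_ae ?_)⟩
  · refine (Measure.restrict_apply_le _ _).trans ?_
    rw [volume_closedBall_eq_rpow y (by positivity), ENNReal.ofReal_mul zero_le_two,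
      ENNReal.mul_rpow_of_nonneg _ _ n.cast_nonneg, ENNReal.ofReal_ofNat]
  · have : 2 * R ≤ a * R := by gcongr
    exact closedBall_subset_closedBall' (by linarith [mem_closedBall.1 hx])
  · filter_upwards [IsUnifLocDoublingMeasure.ae_tendsto_average volume hf 1] with x hx
    exact hx (fun _ => x) id tendsto_id (eventually_mem_nhdsWithin.mono fun ρ hρ =>
      mem_closedBall_self (by simpa using le_of_lt hρ))

end Gagliardo

section DSet

variable {n : ℕ} {S : Set (Rn n)} {d C₀ : ℝ}

lemma IsDSet.restrict_closedBall_le (hS : IsDSet S d C₀) (y : Rn n) {ρ : ℝ} (hρ : 0 < ρ)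
    (hρ1 : 2 * ρ ≤ 1) :
    μH[d].restrict S (closedBall y ρ) ≤ ENNReal.ofReal (C₀ * 2 ^ d) * ENNReal.ofReal ρ ^ d := by
  have hC₀ : 0 < C₀ := zero_lt_one.trans hS.2.1
  rw [Measure.restrict_apply measurableSet_closedBall]
  rcases (closedBall y ρ ∩ S).eq_empty_or_nonempty with h_empty | ⟨z, hz, hzS⟩
  · rw [h_empty, measure_empty]
    exact zero_le
  calc μH[d] (closedBall y ρ ∩ S) ≤ μH[d] (closedBall z (2 * ρ) ∩ S) := by
        gcongr
        exact closedBall_subset_closedBall' (by linarith [mem_closedBall'.1 hz])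
    _ ≤ ENNReal.ofReal (C₀ * (2 * ρ) ^ d) := (hS.2.2 z hzS _ (by positivity) hρ1).2
    _ = ENNReal.ofReal (C₀ * 2 ^ d) * ENNReal.ofReal ρ ^ d := by
        rw [Real.mul_rpow zero_le_two hρ.le, ← mul_assoc, ENNReal.ofReal_mul (by positivity),
          ENNReal.ofReal_rpow_of_pos hρ]

lemma IsDSet.rpow_le_restrict_closedBall (hS : IsDSet S d C₀) {w : Rn n} (hw : w ∈ S) {R : ℝ}
    (hR : 0 < R) (hR1 : R ≤ 1) :
    ENNReal.ofReal R ^ d ≤ ENNReal.ofReal C₀ * μH[d].restrict S (closedBall w R) := by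
  have hC₀ : 0 < C₀ := zero_lt_one.trans hS.2.1
  rw [Measure.restrict_apply measurableSet_closedBall]
  calc ENNReal.ofReal R ^ d = ENNReal.ofReal C₀ * ENNReal.ofReal (C₀⁻¹ * R ^ d) := by
        rw [← ENNReal.ofReal_mul hC₀.le, mul_inv_cancel_left₀ hC₀.ne',
          ENNReal.ofReal_rpow_of_pos hR]
    _ ≤ _ := by
        gcongr
        exact (hS.2.2 w hw R hR hR1).1

lemma enorm_le_of_eLpNorm'_const_le {α F : Type*} [MeasurableSpace α] [NormedAddCommGroup F]
    {μ : Measure α} {m : F} {r d β R : ℝ} {A B K : ℝ≥0∞} (hr : 0 < r) (hR : 0 < R)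
    (hμ : ENNReal.ofReal R ^ d ≤ A * μ univ)
    (hm : eLpNorm' (fun _ => m) r μ ≤ K * (ENNReal.ofReal R ^ (β + d / r) * B)) :
    ‖m‖ₑ ≤ A ^ (1 / r) * K * (ENNReal.ofReal R ^ β * B) := by
  set ρ : ℝ≥0∞ := ENNReal.ofReal R
  have hρ : ρ ≠ 0 := (ENNReal.ofReal_pos.2 hR).ne'
  have h_add : ∀ x y : ℝ, ρ ^ (x + y) = ρ ^ x * ρ ^ y := fun x y =>
    ENNReal.rpow_add x y hρ ENNReal.ofReal_ne_top
  calc ‖m‖ₑ = ρ ^ (-(d / r)) * (‖m‖ₑ * (ρ ^ d) ^ (1 / r)) := by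
        rw [← ENNReal.rpow_mul, mul_one_div, mul_left_comm, ← h_add, neg_add_cancel,
          ENNReal.rpow_zero, mul_one]
    _ ≤ ρ ^ (-(d / r)) * (‖m‖ₑ * (A * μ univ) ^ (1 / r)) := by gcongr
    _ = A ^ (1 / r) * ρ ^ (-(d / r)) * eLpNorm' (fun _ => m) r μ := by
        rw [eLpNorm'_const _ hr, ENNReal.mul_rpow_of_nonneg _ _ (by positivity)]
        ring
    _ ≤ A ^ (1 / r) * ρ ^ (-(d / r)) * (K * (ρ ^ (β + d / r) * B)) := by gcongr
    _ = A ^ (1 / r) * K * (ρ ^ (-(d / r) + (β + d / r)) * B) := by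
        rw [h_add (-(d / r))]
        ring
    _ = A ^ (1 / r) * K * (ρ ^ β * B) := by rw [neg_add_cancel_comm_assoc]

theorem IsDSet.exists_enorm_euclBallAverage_le (hn : 0 < n) (hS : IsDSet S d C₀) {a b r ω : ℝ}
    (hr : 1 ≤ r) (hω : n - d < ω * r) (hω0 : 0 ≤ n + ω * r) (hb : 0 < b) (hba : b ≤ a) :
    ∃ K : ℝ≥0∞, K ≠ ⊤ ∧ ∀ (f : Rn n → ℝ) (c w : Rn n) (R : ℝ), 0 < R → 2 * R ≤ 1 →
      IntegrableOn f (closedBall c (a * R)) → TraceZero S d f → w ∈ S →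
      closedBall w (2 * R) ⊆ closedBall c (a * R) →
      ‖⨍ y in euclBall c (b * R), f y‖ₑ ≤ K * (ENNReal.ofReal R ^ (ω - n / r) *
        gagliardoMeasure f r ω (closedBall c (a * R)) univ ^ (1 / r)) := by
  have hr0 : 0 < r := zero_lt_one.trans_le hr
  have hexp : 0 < ω - n / r + d / r := by
    rw [show ω - n / r + d / r = (ω * r - (n - d)) / r by field_simp; ring]
    exact div_pos (sub_pos.2 hω) hr0
  obtain ⟨K, hK, h_trace⟩ := exists_eLpNorm'_sub_euclBallAverage_le ℝ hn hr le_rfl hω0 hexp hb hba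
    (ENNReal.ofReal_ne_top (r := C₀ * 2 ^ d))
  refine ⟨ENNReal.ofReal C₀ ^ (1 / r) * K, by finiteness,
    fun f c w R hR hR1 hf hf0 hw hwR => ?_⟩
  have h_growth (k : ℕ) (y : Rn n) : μH[d].restrict S (closedBall y (R / 2 ^ k))
      ≤ ENNReal.ofReal (C₀ * 2 ^ d) * ENNReal.ofReal (R / 2 ^ k) ^ d :=
    have h_le : R / 2 ^ k ≤ R := div_le_self hR.le (one_le_pow₀ one_le_two)
    hS.restrict_closedBall_le y (by positivity) (by linarith)
  have h_finite : μH[d].restrict S (closedBall w R) ≠ ⊤ :=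
    ((hS.restrict_closedBall_le w hR hR1).trans_lt (by finiteness)).ne
  set μ : Measure (Rn n) := (μH[d].restrict S).restrict (closedBall w R)
  have : IsFiniteMeasure μ := isFiniteMeasure_restrict.2 h_finite
  have h_mass : ENNReal.ofReal R ^ d ≤ ENNReal.ofReal C₀ * μ univ := by
    rw [Measure.restrict_apply_univ]
    exact hS.rpow_le_restrict_closedBall hw hR (by linarith)
  have h_sub : ∀ᵐ x ∂μ, closedBall x R ⊆ closedBall c (a * R) :=
    (ae_restrict_mem measurableSet_closedBall).mono fun x hx =>
      (closedBall_subset_closedBall' (by linarith [mem_closedBall.1 hx])).trans hwR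
  have h_norm := h_trace f (fun _ => 0) c R μ hR hf
    (fun k y => (Measure.restrict_apply_le _ _).trans (h_growth k y)) h_sub (ae_restrict_of_ae hf0)
  simp only [zero_sub] at h_norm
  rw [← enorm_neg]
  exact enorm_le_of_eLpNorm'_const_le hr0 hR h_mass h_norm

end DSet

section WhitneyCubes

variable {n : ℕ}

lemma lintegral_enorm_sub_rpow_add_le {E : Type*} [NormedAddCommGroup E] {f : Rn n → E} {m : E}
    {c : Rn n} {R p β : ℝ} {B K₁ K₂ : ℝ≥0∞} (hp : 0 < p) (hR : 0 < R)
    (h₁ : eLpNorm' (fun x => f x - m) p (volume.restrict (closedBall c R))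
      ≤ K₁ * (ENNReal.ofReal R ^ (β + n / p) * B))
    (h₂ : ‖m‖ₑ ≤ K₂ * (ENNReal.ofReal R ^ β * B)) :
    (∫⁻ x in closedBall c R, ‖f x - m‖ₑ ^ p) + volume (closedBall c R) * ‖m‖ₑ ^ p
      ≤ (K₁ ^ p + 2 ^ (n : ℝ) * K₂ ^ p) * (ENNReal.ofReal R ^ (n + p * β) * B ^ p) := by
  set ρ : ℝ≥0∞ := ENNReal.ofReal R
  have hρ : ρ ≠ 0 := (ENNReal.ofReal_pos.2 hR).ne'
  have h_exp : (β + n / p) * p = n + p * β := by field_simp; ring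
  have h_vol : volume (closedBall c R) = 2 ^ (n : ℝ) * ρ ^ (n : ℝ) := by
    rw [volume_closedBall_eq_rpow c hR.le, ENNReal.ofReal_mul zero_le_two,
      ENNReal.mul_rpow_of_nonneg _ _ n.cast_nonneg, ENNReal.ofReal_ofNat]
  calc _ ≤ (K₁ * (ρ ^ (β + n / p) * B)) ^ p
        + 2 ^ (n : ℝ) * ρ ^ (n : ℝ) * (K₂ * (ρ ^ β * B)) ^ p := by
        rw [lintegral_rpow_enorm_eq_rpow_eLpNorm' hp, h_vol]
        gcongr
    _ = (K₁ ^ p + 2 ^ (n : ℝ) * K₂ ^ p) * (ρ ^ (n + p * β) * B ^ p) := by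
        simp only [ENNReal.mul_rpow_of_nonneg _ _ hp.le, ← ENNReal.rpow_mul]
        rw [h_exp, ENNReal.rpow_add _ _ hρ ENNReal.ofReal_ne_top, mul_comm p β]
        ring

lemma ofReal_rpow_le_volume_closedBall_rpow (hn : 0 < n) (c : Rn n) {R a p r ω : ℝ} (hR : 0 ≤ R)
    (ha : 1 ≤ a) (h : 0 ≤ n + p * (ω - n / r)) :
    ENNReal.ofReal R ^ (n + p * (ω - n / r))
      ≤ volume (closedBall c (a * R)) ^ (1 + p * ω / n - p / r) := by
  have h_exp : n + p * (ω - n / r) = n * (1 + p * ω / n - p / r) := by field_simp; ring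
  rw [volume_closedBall_eq_rpow c (by positivity), ← ENNReal.rpow_mul, ← h_exp]
  gcongr
  nlinarith

theorem whitney_cube_estimate_general (hn : 0 < n) {S : Set (Rn n)} {d C₀ : ℝ}
    (hS : IsDSet S d C₀) {p r ω c₀ : ℝ} (hr : 1 ≤ r) (hrp : r ≤ p) (hωd : (n : ℝ) - d < ω * r)
    (hωn : 1 / r - 1 / p < ω / n) (hc₀ : 2 ≤ c₀) :
    ∃ C > (0 : ℝ), ∀ f : Rn n → ℝ, LocallyIntegrable f → TraceZero S d f →
      ∀ (c : Rn n) (L : ℝ), 0 < L → L ≤ 1 → (∃ w ∈ S, dist w c ≤ 5 * L) →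
        (∫⁻ x in closedBall c (L / 2),
            ENNReal.ofReal |f x - ⨍ y in euclBall c (12 * L / c₀), f y| ^ p)
          + volume (closedBall c (L / 2)) *
              ENNReal.ofReal |⨍ y in euclBall c (12 * L / c₀), f y| ^ p
        ≤ ENNReal.ofReal C * volume (closedBall c (6 * L)) ^ (1 + p * ω / n - p / r) *
            (∫⁻ x in closedBall c (6 * L), ∫⁻ y in closedBall c (6 * L),
              ENNReal.ofReal |f x - f y| ^ r *
                ENNReal.ofReal (euclDist x y) ^ (-((n : ℝ) + ω * r))) ^ (p / r) := by
  have hr0 : 0 < r := zero_lt_one.trans_le hr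
  have hp0 : 0 < p := hr0.trans_le hrp
  have hω : 0 < ω := (div_pos_iff_of_pos_right (Nat.cast_pos.2 hn)).1 <|
    (sub_nonneg.2 (one_div_le_one_div_of_le hr0 hrp)).trans_lt hωn
  have hω0 : 0 ≤ n + ω * r := by positivity
  have hexp : 0 < ω - n / r + n / p := by
    rw [lt_div_iff₀' (by positivity)] at hωn
    linarith [mul_sub (n : ℝ) (1 / r) (1 / p), mul_one_div (n : ℝ) r, mul_one_div (n : ℝ) p]
  have hb : 24 / c₀ ≤ 12 := by rw [div_le_iff₀] <;> linarith
  obtain ⟨K₁, hK₁, h_poincare⟩ := exists_eLpNorm'_restrict_sub_euclBallAverage_le ℝ hn hr hrp hω0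
    hexp (a := 12) (by norm_num) (by positivity) hb
  obtain ⟨K₂, hK₂, h_trace⟩ := hS.exists_enorm_euclBallAverage_le hn hr hωd hω0 (by positivity) hb
  obtain ⟨C, -, hKC, -⟩ := ENNReal.lt_iff_exists_real_btwn.1
    (show K₁ ^ p + 2 ^ (n : ℝ) * K₂ ^ p < ⊤ by finiteness)
  have h_pow : 0 ≤ n + p * (ω - n / r) := by
    rw [show n + p * (ω - n / r) = p * (ω - n / r + n / p) by field_simp; ring]
    positivity
  refine ⟨C, ENNReal.ofReal_pos.1 (bot_le.trans_lt hKC), fun f hf hf0 c L hL hL1 ⟨w, hw, hwc⟩ => ?_⟩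
  have h_ball : closedBall w (2 * (L / 2)) ⊆ closedBall c (12 * (L / 2)) :=
    closedBall_subset_closedBall' (by linarith)
  have h_bound := lintegral_enorm_sub_rpow_add_le hp0 (half_pos hL)
    (h_poincare f c (L / 2) (half_pos hL) hf)
    (h_trace f c w (L / 2) (half_pos hL) (by linarith)
      (hf.integrableOn_isCompact (isCompact_closedBall _ _)) hf0 hw h_ball)
  rw [show 12 * L / c₀ = 24 / c₀ * (L / 2) by ring, show 6 * L = 12 * (L / 2) by ring]
  simp only [← Real.enorm_eq_ofReal_abs]
  refine h_bound.trans ?_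
  rw [← ENNReal.rpow_mul, one_div_mul_eq_div, gagliardoMeasure_univ, ← mul_assoc]
  gcongr
  · exact ofReal_rpow_le_volume_closedBall_rpow hn c (half_pos hL).le (by norm_num) h_pow
  · rfl

lemma dyadicCube_eq_closedBall (j : ℤ) (m : Fin n → ℤ) :
    dyadicCube j m = closedBall (dyadicCenter j m) (2 ^ (-j) / 2) := by
  ext y
  rw [mem_closedBall, dist_pi_le_iff (by positivity)]
  refine forall_congr' fun i => ?_
  rw [Real.dist_eq, abs_le, dyadicCenter]
  constructor <;> rintro ⟨h₁, h₂⟩ <;> constructor <;> linarith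

lemma IsWhitney.exists_mem_dist_center_le {S : Set (Rn n)} {W : Set (ℤ × (Fin n → ℤ))}
    (hW : IsWhitney S W) (hS : IsClosed S) {Q : ℤ × (Fin n → ℤ)} (hQ : Q ∈ W) :
    ∃ w ∈ S, dist w (dyadicCenter Q.1 Q.2) ≤ 5 * 2 ^ (-Q.1) := by
  obtain ⟨h_lower, x, hx, h_upper⟩ := hW.2.2 Q hQ
  have h_side : (0 : ℝ) < 2 ^ (-Q.1) := by positivity
  have hS0 : S.Nonempty := nonempty_iff_ne_empty.2 fun h_empty => by
    exact h_side.not_ge (by simpa only [h_empty, infDist_empty] using h_lower x hx)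
  obtain ⟨w, hw, hxw⟩ := hS.exists_infDist_eq_dist hS0 x
  rw [dyadicCube_eq_closedBall, mem_closedBall] at hx
  exact ⟨w, hw, by linarith [dist_triangle_left w (dyadicCenter Q.1 Q.2) x]⟩

lemma locallyIntegrable_of_sobolevNorm_lt_top {s p : ℝ} {f : Rn n → ℝ} (hp : 1 ≤ p)
    (hf : Measurable f) (hfs : sobolevNorm s p f < ⊤) : LocallyIntegrable f := by
  have hp0 : 0 < p := zero_lt_one.trans_le hp
  have h_norm : eLpNorm f (ENNReal.ofReal p) volume < ⊤ := by
    rw [eLpNorm_eq_lintegral_rpow_enorm_toReal (by simpa) ENNReal.ofReal_ne_top,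
      ENNReal.toReal_ofReal hp0.le]
    simp only [Real.enorm_eq_ofReal_abs]
    exact (ENNReal.add_lt_top.1 hfs).1
  exact MemLp.locallyIntegrable ⟨hf.aestronglyMeasurable, h_norm⟩ (by simpa)

end WhitneyCubes

/-- **The key Whitney-cube estimate** (inequality (3.6) in the proof of Theorem 3.2).
Let `S ⊆ ℝⁿ` (`n ≥ 2`) be a `d`-set, `n−1 < d < n`, `1 < p < ∞`, `(n−d)/p < s < 1`,
and let `r ∈ (1,p)` be such that `ω = n(1/p − 1/r) + s` satisfies `n−d < ωr < sp` and
`0 < 1/r − 1/p < ω/n`. Then there are `c₀ > 2` and `C > 0` such that for every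
`f ∈ W^{s,p}(ℝⁿ)` with vanishing trace on `S` and every Whitney cube `Q ∈ 𝒲_S` of side
`ℓ(Q) = 2^{−j} ≤ 1`, with `Q* = 12Q` (sup-norm ball of radius `6·2^{−j}`) and
`B = B(x_Q, ℓ(Q*)/c₀)` the Euclidean ball of radius `12·2^{−j}/c₀`,
`∫_Q |f − f_B|^p + |Q||f_B|^p ≤ C |Q*|^{1+pω/n−p/r} (∫_{Q*}∫_{Q*} |f(x)−f(y)|^r/|x−y|^{n+ωr})^{p/r}`. -/
theorem whitney_cube_estimate {n : ℕ} (hn : 2 ≤ n) (S : Set (Rn n)) (d C₀ : ℝ)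
    (hS : IsDSet S d C₀) (hd1 : (n : ℝ) - 1 < d) (hd2 : d < n)
    (p s r ω : ℝ) (hp : 1 < p) (hs1 : ((n : ℝ) - d) / p < s) (hs2 : s < 1)
    (hr1 : 1 < r) (hr2 : r < p) (hω : ω = n * (1 / p - 1 / r) + s)
    (hω1 : (n : ℝ) - d < ω * r) (hω2 : ω * r < s * p)
    (h3 : 0 < 1 / r - 1 / p) (h4 : 1 / r - 1 / p < ω / n)
    (W : Set (ℤ × (Fin n → ℤ))) (hW : IsWhitney S W) :
    ∃ c₀' > (2:ℝ), ∃ C > (0:ℝ), ∀ f : Rn n → ℝ, Measurable f →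
      sobolevNorm s p f < ⊤ → TraceZero S d f →
      ∀ Q ∈ W, (2:ℝ) ^ (-Q.1) ≤ 1 →
        (∫⁻ x in dyadicCube Q.1 Q.2,
            ENNReal.ofReal
              |f x - ⨍ y in euclBall (dyadicCenter Q.1 Q.2) (12 * (2:ℝ) ^ (-Q.1) / c₀'), f y| ^ p)
          + volume (dyadicCube Q.1 Q.2) *
              ENNReal.ofReal
                |⨍ y in euclBall (dyadicCenter Q.1 Q.2) (12 * (2:ℝ) ^ (-Q.1) / c₀'), f y| ^ p
        ≤ ENNReal.ofReal C *
            volume (closedBall (dyadicCenter Q.1 Q.2) (6 * (2:ℝ) ^ (-Q.1)))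
              ^ (1 + p * ω / n - p / r) *
            (∫⁻ x in closedBall (dyadicCenter Q.1 Q.2) (6 * (2:ℝ) ^ (-Q.1)),
                ∫⁻ y in closedBall (dyadicCenter Q.1 Q.2) (6 * (2:ℝ) ^ (-Q.1)),
                  ENNReal.ofReal |f x - f y| ^ r *
                    ENNReal.ofReal (euclDist x y) ^ (-((n:ℝ) + ω * r))) ^ (p / r) := by
  obtain ⟨C, hC, h_estimate⟩ := whitney_cube_estimate_general (by omega) hS hr1.le hr2.le hω1 h4
    (c₀ := 3) (by norm_num)
  refine ⟨3, by norm_num, C, hC, fun f hf hfs hf0 Q hQ hL => ?_⟩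
  rw [dyadicCube_eq_closedBall]
  exact h_estimate f (locallyIntegrable_of_sobolevNorm_lt_top hp.le hf hfs) hf0 _ _
    (by positivity) hL (hW.exists_mem_dist_center_le hS.1 hQ)
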